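/- Let q be a free idempotent ultrafilter on ℕ, let γ > 0 be irrational, and let f : ℝ → ℝ be γ-periodic (f(x + γ) = f(x) for all x). Let x ∈ ℝ and suppose f has derivative L at x. Then for every real ε > 0, the set {n : ℕ | |(f(x + n) − f(x))/rm_γ(n) − L| < ε} belongs to q. (I.e., the standard part of Δf(x)/[rm_γ] equals f′(x), where Δf(x) is the germ n ↦ f(x + n) − f(x) over q.) -/

import Mathlib

noncomputable def rm (γ : ℝ) (n : ℕ) : ℝ := (n : ℝ) - γ * (round ((n : ℝ) / γ) : ℝ)

/-!
The limit `a` along an idempotent ultrafilter of an additive map into a compact Hausdorff group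
satisfies `a + a = a`, hence `a = 0`. Applied to `n ↦ n / γ` modulo `1`, this says that `rm γ n`
tends to `0`. By periodicity `f (x + n) = f (x + rm γ n)`, so the quotient in question is a
difference quotient of `f` at `x` whose increments `rm γ n` tend to `0` without vanishing.
-/

open Filter Topology

attribute [local instance] Ultrafilter.add

theorem ultrafilter_add_self_eq_iff {M : Type*} [AddCommMagma M] {q : Ultrafilter M} :
    q + q = q ↔ ∀ S : Set M, S ∈ q ↔ {n | {m | m + n ∈ S} ∈ q} ∈ q := by
  simp only [Ultrafilter.ext_iff, add_comm _ (_ : M)]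
  exact forall_congr' fun _ => Iff.comm

section AddHom

variable {M G : Type*} [Add M] [TopologicalSpace G]

theorem tendsto_addHom_ultrafilter_add [Add G] [ContinuousAdd G] (φ : M →ₙ+ G)
    {p q : Ultrafilter M} {a b : G} (hp : Tendsto φ p (𝓝 a)) (hq : Tendsto φ q (𝓝 b)) :
    Tendsto φ ↑(p + q) (𝓝 (a + b)) := by
  have hsum : Tendsto (fun z : M × M => φ (z.1 + z.2)) (↑p ×ˢ ↑q) (𝓝 (a + b)) := by
    simpa only [map_add, Function.comp_apply] using (hp.comp tendsto_fst).add (hq.comp tendsto_snd)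
  exact fun U hU => (Ultrafilter.eventually_add p q (φ · ∈ U)).2 (hsum.eventually hU).curry

theorem tendsto_addHom_nhds_zero_of_add_self_eq [AddMonoid G] [IsLeftCancelAdd G]
    [ContinuousAdd G] [CompactSpace G] [T2Space G] (φ : M →ₙ+ G) {q : Ultrafilter M}
    (hq : q + q = q) : Tendsto φ q (𝓝 0) := by
  obtain ⟨a, ha⟩ : ∃ a, Tendsto φ q (𝓝 a) := ⟨_, (q.map φ).le_nhds_lim⟩
  have haa : Tendsto φ q (𝓝 (a + a)) := by
    simpa only [hq] using tendsto_addHom_ultrafilter_add φ ha ha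
  rwa [add_eq_left.1 (tendsto_nhds_unique haa ha)] at ha

theorem tendsto_sub_round_nhds_zero_of_add_self_eq (θ : M →ₙ+ ℝ) {q : Ultrafilter M}
    (hq : q + q = q) : Tendsto (fun m => θ m - round (θ m)) q (𝓝 0) := by
  let φ : M →ₙ+ UnitAddCircle :=
    ⟨fun m => (θ m : UnitAddCircle), fun m n => by rw [map_add, AddCircle.coe_add]⟩
  have hφ : Tendsto φ q (𝓝 0) := tendsto_addHom_nhds_zero_of_add_self_eq φ hq
  rw [tendsto_zero_iff_norm_tendsto_zero] at hφ ⊢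
  exact hφ.congr fun m => UnitAddCircle.norm_eq

end AddHom

section Rm

variable {γ : ℝ}

theorem rm_eq_mul_sub_round (hγ : γ ≠ 0) (n : ℕ) :
    rm γ n = γ * ((n : ℝ) / γ - round ((n : ℝ) / γ)) := by
  rw [rm, mul_sub, mul_div_cancel₀ _ hγ]

theorem rm_ne_zero (hγ : Irrational γ) {n : ℕ} (hn : n ≠ 0) : rm γ n ≠ 0 := by
  intro h
  have hmul : (n : ℝ) = γ * round ((n : ℝ) / γ) := sub_eq_zero.1 h
  have hround : round ((n : ℝ) / γ) ≠ 0 := fun h0 => by simp [h0, hn] at hmul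
  exact (hγ.mul_intCast hround).ne_nat n hmul.symm

theorem tendsto_rm_nhds_zero (hγ : γ ≠ 0) {q : Ultrafilter ℕ} (hq : q + q = q) :
    Tendsto (rm γ) q (𝓝 0) := by
  let θ : ℕ →ₙ+ ℝ := ⟨fun n => (n : ℝ) / γ, fun m n => by rw [Nat.cast_add, add_div]⟩
  have hθ := (tendsto_sub_round_nhds_zero_of_add_self_eq θ hq).const_mul γ
  rw [mul_zero] at hθ
  exact hθ.congr fun n => (rm_eq_mul_sub_round hγ n).symm

theorem tendsto_rm_nhdsNE_zero (hγ : Irrational γ) {q : Ultrafilter ℕ} (hq : q + q = q)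
    (hq₀ : {0} ∉ q) : Tendsto (rm γ) q (𝓝[≠] 0) := by
  have hne : ∀ᶠ n in q, n ≠ 0 := Ultrafilter.compl_mem_iff_notMem.2 hq₀
  exact tendsto_nhdsWithin_iff.2
    ⟨tendsto_rm_nhds_zero hγ.ne_zero hq, hne.mono fun _ => rm_ne_zero hγ⟩

theorem apply_add_rm_of_periodic {α : Type*} {f : ℝ → α} (hf : Function.Periodic f γ) (x : ℝ)
    (n : ℕ) : f (x + rm γ n) = f (x + n) := by
  rw [rm, ← add_sub_assoc, mul_comm, hf.sub_int_mul_eq]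

end Rm

theorem stmt_10_general {E : Type*} [NormedAddCommGroup E] [NormedSpace ℝ E]
    {q : Ultrafilter ℕ} (hq : q + q = q) (hq₀ : {0} ∉ q) {γ : ℝ} (hγ : Irrational γ)
    {f : ℝ → E} (hf : Function.Periodic f γ) {x : ℝ} {L : E} (hL : HasDerivAt f L x) :
    Tendsto (fun n : ℕ => (rm γ n)⁻¹ • (f (x + n) - f x)) q (𝓝 L) := by
  simpa only [Function.comp_def, apply_add_rm_of_periodic hf] using
    hL.tendsto_slope_zero.comp (tendsto_rm_nhdsNE_zero hγ hq hq₀)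

theorem stmt_10 (q : Ultrafilter ℕ)
    (hfree : ∀ S : Set ℕ, S.Finite → S ∉ q)
    (hidem : ∀ S : Set ℕ, S ∈ q ↔ {n : ℕ | {m : ℕ | m + n ∈ S} ∈ q} ∈ q)
    (γ : ℝ) (hγpos : 0 < γ) (hγirr : Irrational γ)
    (f : ℝ → ℝ) (hper : ∀ x : ℝ, f (x + γ) = f x)
    (x : ℝ) (L : ℝ) (hderiv : HasDerivAt f L x) :
    ∀ ε : ℝ, 0 < ε →
      {n : ℕ | |(f (x + n) - f x) / rm γ n - L| < ε} ∈ q := by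
  simpa only [smul_eq_mul, ← div_eq_inv_mul, Metric.tendsto_nhds, Real.dist_eq] using!
    stmt_10_general (ultrafilter_add_self_eq_iff.2 hidem) (hfree {0} (Set.finite_singleton 0))
      hγirr hper hderiv
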